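/- Define real sequences (α_j)_{j≥0} and (γ_j)_{j≥0} by α₀ = 1, α₁ = 1/12, α_j = (6^(j−1) − 1)⁻¹ · Σ_{i=1}^{j−1} α_i α_{j−i} for j ≥ 2, and γ₀ = 1/3, γ_j = (6^j − 1)⁻¹ · Σ_{i=1}^{j} α_i γ_{j−i} for j ≥ 1. Then γ_j = 4·α_{j+1} for every natural number j. -/

import Mathlib

/-!
With `α` regarded as a fixed sequence of coefficients, the recursion for `γ` is linear in `γ`. The
quadratic recursion for `α`, shifted by one index, says that `j ↦ α (j + 1)` solves this same linear
recursion. A solution is determined by its value at `0`, and `γ 0 = 4 * α 1`.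
-/

open Finset

/-- `f` solves the linear recursion `f n = w n • ∑_{i = 1}^n u i • f (n - i)` for `n ≥ 1`, with
weights `w` and convolution coefficients `u`. The initial value `f 0` is left free. -/
def IsConvRecSolution {R M : Type*} [AddCommMonoid M] [SMul R M]
    (w u : ℕ → R) (f : ℕ → M) : Prop :=
  ∀ n, 1 ≤ n → f n = w n • ∑ i ∈ Icc 1 n, u i • f (n - i)

namespace IsConvRecSolution

theorem eq_of_apply_zero_eq {R M : Type*} [AddCommMonoid M] [SMul R M]
    {w u : ℕ → R} {f g : ℕ → M} (hf : IsConvRecSolution w u f) (hg : IsConvRecSolution w u g)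
    (h0 : f 0 = g 0) : f = g := by
  funext n
  induction n using Nat.strong_induction_on with
  | h n ih =>
    rcases n.eq_zero_or_pos with rfl | hn
    · exact h0
    · have hsum : ∑ i ∈ Icc 1 n, u i • f (n - i) = ∑ i ∈ Icc 1 n, u i • g (n - i) :=
        sum_congr rfl fun i hi => by
          rw [ih (n - i) (Nat.sub_lt hn (mem_Icc.mp hi).1)]
      rw [hf n hn, hg n hn, hsum]

theorem const_smul {R S M : Type*} [AddCommMonoid M] [SMul R M] [DistribSMul S M]
    [SMulCommClass S R M] {w u : ℕ → R} {f : ℕ → M} (hf : IsConvRecSolution w u f) (c : S) :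
    IsConvRecSolution w u (c • f) := fun n hn => by
  simp only [Pi.smul_apply, hf n hn, smul_comm c (w n), smul_sum, smul_comm c (u _)]

theorem shift_of_self_convolution {R : Type*} [NonUnitalNonAssocSemiring R] {w a : ℕ → R}
    (ha : ∀ j, 2 ≤ j → a j = w (j - 1) * ∑ i ∈ Icc 1 (j - 1), a i * a (j - i)) :
    IsConvRecSolution w a fun n => a (n + 1) := fun n hn => by
  have hsum : ∑ i ∈ Icc 1 n, a i * a (n + 1 - i) = ∑ i ∈ Icc 1 n, a i * a (n - i + 1) :=
    sum_congr rfl fun i hi => by rw [Nat.sub_add_comm (mem_Icc.mp hi).2]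
  simpa only [smul_eq_mul, Nat.add_sub_cancel, hsum] using ha (n + 1) (Nat.succ_le_succ hn)

end IsConvRecSolution

theorem stmt_18_general {R : Type*} [CommSemiring R] (w : ℕ → R) (c : R) (α γ : ℕ → R)
    (hα : ∀ j : ℕ, 2 ≤ j → α j = w (j - 1) * ∑ i ∈ Icc 1 (j - 1), α i * α (j - i))
    (hγ0 : γ 0 = c * α 1)
    (hγ : ∀ j : ℕ, 1 ≤ j → γ j = w j * ∑ i ∈ Icc 1 j, α i * γ (j - i)) :
    ∀ j : ℕ, γ j = c * α (j + 1) := by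
  have hγ_sol : IsConvRecSolution w α γ := hγ
  have hα_sol : IsConvRecSolution w α fun j => α (j + 1) := .shift_of_self_convolution hα
  exact congrFun (hγ_sol.eq_of_apply_zero_eq (hα_sol.const_smul c) hγ0)

/-- On SG⁴, the sequences `α_j` and `γ_j` defined by the explicit recursions of
Subsection 7.3 satisfy `γ_j = 4·α_{j+1}` for all `j`. -/
theorem stmt_18 (α γ : ℕ → ℝ)
    (hα0 : α 0 = 1) (hα1 : α 1 = 1 / 12)
    (hα : ∀ j : ℕ, 2 ≤ j →
      α j = ((6 : ℝ) ^ (j - 1) - 1)⁻¹ * ∑ i ∈ Finset.Icc 1 (j - 1), α i * α (j - i))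
    (hγ0 : γ 0 = 1 / 3)
    (hγ : ∀ j : ℕ, 1 ≤ j →
      γ j = ((6 : ℝ) ^ j - 1)⁻¹ * ∑ i ∈ Finset.Icc 1 j, α i * γ (j - i)) :
    ∀ j : ℕ, γ j = 4 * α (j + 1) := by
  have hγ0_eq : γ 0 = 4 * α 1 := by norm_num [hγ0, hα1]
  exact stmt_18_general (fun j => ((6 : ℝ) ^ j - 1)⁻¹) 4 α γ hα hγ0_eq hγ
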